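/- Let p > 2 and μ > 0, and let u = u_{μ,*} with u_{μ,*}(s) = (p μ / 2)^{1/(p-2)} (cosh(((p-2)/2) √μ s))^{-2/(p-2)}. Then: (i) ∫_ℝ u^{2(p-1)} ds = (p² μ/(3p-2)) ∫_ℝ u^p ds; (ii) ∫_ℝ u^{3p-4} ds = (2 p³ (p-1) μ²/((3p-2)(5p-6))) ∫_ℝ u^p ds; and (iii) ∫_ℝ |(u^{p/2})'|² ds = (p² (p-2) μ/(4(3p-2))) ∫_ℝ u^p ds. -/

import Mathlib

open MeasureTheory

lemma aux_int (k : ℝ) (hk : 0 < k) (a : ℝ) (ha : 2 ≤ a) :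
    Integrable (fun s : ℝ => Real.cosh (k * s) ^ (-a)) := by
  have h0 : Integrable (fun s : ℝ => (1 + (k * s) ^ 2)⁻¹) :=
    integrable_inv_one_add_sq.comp_mul_left' hk.ne'
  refine h0.mono' ?_ ?_
  · apply Continuous.aestronglyMeasurable
    apply Continuous.rpow_const
    · fun_prop
    · intro x
      exact Or.inl (Real.cosh_pos _).ne'
  · refine Filter.Eventually.of_forall fun s => ?_
    have hc := Real.cosh_pos (k * s)
    rw [Real.norm_of_nonneg (Real.rpow_nonneg hc.le _)]
    have h1 : Real.cosh (k * s) ^ (-a) ≤ Real.cosh (k * s) ^ (-2 : ℝ) :=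
      Real.rpow_le_rpow_of_exponent_le (Real.one_le_cosh _) (by linarith)
    refine h1.trans ?_
    rw [Real.rpow_neg hc.le, Real.rpow_two]
    apply inv_anti₀ (by positivity)
    rw [Real.cosh_sq]
    have h2 : (k * s) ^ 2 ≤ Real.sinh (k * s) ^ 2 := by
      apply sq_le_sq.2
      rw [Real.abs_sinh]
      exact Real.self_le_sinh_iff.2 (abs_nonneg _)
    linarith

lemma aux_deriv (k b s : ℝ) :
    HasDerivAt (fun s : ℝ => Real.cosh (k * s) ^ b)
      (b * k * (Real.sinh (k * s) * Real.cosh (k * s) ^ (b - 1))) s := by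
  have h1 : HasDerivAt (fun s : ℝ => k * s) k s := by
    simpa using (hasDerivAt_id s).const_mul k
  have h2 := (h1.cosh).rpow_const (p := b) (Or.inl (Real.cosh_pos _).ne')
  convert h2 using 1
  ring

lemma aux_pow (x b : ℝ) : Real.cosh x ^ (b + 2) = Real.cosh x ^ 2 * Real.cosh x ^ b := by
  rw [Real.rpow_add (Real.cosh_pos _), Real.rpow_two, mul_comm]

lemma aux_rec (k : ℝ) (hk : 0 < k) (a : ℝ) (ha : 2 ≤ a) :
    (∫ s : ℝ, Real.cosh (k * s) ^ (-(a + 2))) =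
      a / (a + 1) * ∫ s : ℝ, Real.cosh (k * s) ^ (-a) := by
  have hI := aux_int k hk a ha
  have hI2 := aux_int k hk (a + 2) (by linarith)
  have hd : ∀ s : ℝ, HasDerivAt (fun s : ℝ => Real.sinh (k * s) * Real.cosh (k * s) ^ (-a - 1))
      (k * (a + 1) * Real.cosh (k * s) ^ (-(a + 2)) - k * a * Real.cosh (k * s) ^ (-a)) s := by
    intro s
    have h1 : HasDerivAt (fun s : ℝ => k * s) k s := by
      simpa using (hasDerivAt_id s).const_mul k
    refine (h1.sinh.mul (aux_deriv k (-a - 1) s)).congr_deriv ?_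
    have e1 := aux_pow (k * s) (-(a + 2))
    rw [show -(a + 2) + 2 = -a by ring] at e1
    have e2 : Real.cosh (k * s) ^ (-a) = Real.cosh (k * s) ^ (-a - 1) * Real.cosh (k * s) := by
      rw [← Real.rpow_add_one (Real.cosh_pos _).ne']; congr 1; ring
    rw [show -a - 1 - 1 = -(a + 2) by ring]
    have e3 := Real.cosh_sq (k * s)
    linear_combination (k * (a + 1) * Real.cosh (k * s) ^ (-(a + 2))) * e3 + k * (a + 1) * e1 -
      k * e2
  have hf : Integrable (fun s : ℝ => Real.sinh (k * s) * Real.cosh (k * s) ^ (-a - 1)) := by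
    refine hI.mono' ?_ ?_
    · exact (continuous_iff_continuousAt.2 fun s => (hd s).continuousAt).aestronglyMeasurable
    · refine Filter.Eventually.of_forall fun s => ?_
      have hc := Real.cosh_pos (k * s)
      rw [norm_mul, Real.norm_of_nonneg (Real.rpow_nonneg hc.le _)]
      have e2 : Real.cosh (k * s) ^ (-a) = Real.cosh (k * s) * Real.cosh (k * s) ^ (-a - 1) := by
        rw [mul_comm (Real.cosh _), ← Real.rpow_add_one (Real.cosh_pos _).ne']; congr 1; ring
      rw [e2]
      refine mul_le_mul_of_nonneg_right ?_ (Real.rpow_nonneg hc.le _)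
      rw [Real.norm_eq_abs]
      apply abs_le_of_sq_le_sq _ hc.le
      rw [Real.cosh_sq]; linarith
  have h := integral_eq_zero_of_hasDerivAt_of_integrable hd
    ((hI2.const_mul _).sub (hI.const_mul _)) hf
  rw [integral_sub (hI2.const_mul _) (hI.const_mul _), integral_const_mul,
    integral_const_mul] at h
  have : a + 1 ≠ 0 := by linarith
  field_simp
  apply mul_left_cancel₀ hk.ne'
  linarith



/-- For `p > 2`, `μ > 0` and `u = u_{μ,*}` as in the paper:
(i) `∫ u^{2(p-1)} = (p²μ/(3p-2)) ∫ u^p`;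
(ii) `∫ u^{3p-4} = (2p³(p-1)μ²/((3p-2)(5p-6))) ∫ u^p`;
(iii) `∫ |(u^{p/2})'|² = (p²(p-2)μ/(4(3p-2))) ∫ u^p`. -/
theorem statement8 (p μ : ℝ) (hp : 2 < p) (hμ : 0 < μ)
    (u : ℝ → ℝ)
    (hu : ∀ s, u s = (p * μ / 2) ^ (1 / (p - 2)) *
      Real.cosh ((p - 2) / 2 * Real.sqrt μ * s) ^ (-(2 / (p - 2)))) :
    (∫ s : ℝ, u s ^ (2 * (p - 1))) = p ^ 2 * μ / (3 * p - 2) * ∫ s : ℝ, u s ^ p ∧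
    (∫ s : ℝ, u s ^ (3 * p - 4)) =
      2 * p ^ 3 * (p - 1) * μ ^ 2 / ((3 * p - 2) * (5 * p - 6)) * ∫ s : ℝ, u s ^ p ∧
    (∫ s : ℝ, deriv (fun t => u t ^ (p / 2)) s ^ 2) =
      p ^ 2 * (p - 2) * μ / (4 * (3 * p - 2)) * ∫ s : ℝ, u s ^ p := by
  have hp2 : 0 < p - 2 := by linarith
  have hB : 0 < p * μ / 2 := by positivity
  obtain ⟨k, hk⟩ : ∃ k, k = (p - 2) / 2 * Real.sqrt μ := ⟨_, rfl⟩
  have hk0 : 0 < k := by rw [hk]; positivity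
  obtain ⟨a, ha⟩ : ∃ a, a = 2 * p / (p - 2) := ⟨_, rfl⟩
  have ha2 : 2 ≤ a := by rw [ha, le_div_iff₀ hp2]; linarith
  have hpow : ∀ s q, u s ^ q = (p * μ / 2) ^ (q / (p - 2)) *
      Real.cosh (k * s) ^ (-(2 * q / (p - 2))) := by
    intro s q
    have hc := Real.cosh_pos (k * s)
    rw [hu, ← hk, Real.mul_rpow (by positivity) (by positivity), ← Real.rpow_mul hB.le,
      ← Real.rpow_mul hc.le]
    congr 2 <;> ring
  have r1 := aux_rec k hk0 a ha2
  have r2 := aux_rec k hk0 (a + 2) (by linarith)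
  have hI := aux_int k hk0 a ha2
  have hI2 := aux_int k hk0 (a + 2) (by linarith)
  have h3 : 3 * p - 2 ≠ 0 := by linarith
  have h5 : 5 * p - 6 ≠ 0 := by linarith
  have c1 : a / (a + 1) = 2 * p / (3 * p - 2) := by
    have : a + 1 ≠ 0 := by linarith
    rw [div_eq_div_iff this h3, ha]; field_simp; ring
  have c2 : (a + 2) / (a + 2 + 1) = 4 * (p - 1) / (5 * p - 6) := by
    have : a + 2 + 1 ≠ 0 := by linarith
    rw [div_eq_div_iff this h5, ha]; field_simp; ring
  rw [c2, r1, c1] at r2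
  rw [c1] at r1
  have hP : (∫ s : ℝ, u s ^ p) =
      (p * μ / 2) ^ (p / (p - 2)) * ∫ s : ℝ, Real.cosh (k * s) ^ (-a) := by
    simp_rw [hpow, ← ha]
    rw [integral_const_mul]
  refine ⟨?_, ?_, ?_⟩
  · rw [hP]
    simp_rw [hpow]
    rw [integral_const_mul, show 2 * (2 * (p - 1)) / (p - 2) = a + 2 by
      rw [ha]; field_simp; ring, r1, show 2 * (p - 1) / (p - 2) = p / (p - 2) + 1 by
      field_simp; ring, Real.rpow_add_one hB.ne']
    field_simp
  · rw [hP]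
    simp_rw [hpow]
    rw [integral_const_mul, show 2 * (3 * p - 4) / (p - 2) = a + 2 + 2 by
      rw [ha]; field_simp; ring, r2, show (3 * p - 4) / (p - 2) = p / (p - 2) + 1 + 1 by
      field_simp; ring, Real.rpow_add_one hB.ne', Real.rpow_add_one hB.ne']
    field_simp
    try ring
  · have hd : ∀ s, deriv (fun t => u t ^ (p / 2)) s ^ 2 =
        (p * μ / 2) ^ (p / (p - 2)) * (p ^ 2 * μ / 4) *
          (Real.cosh (k * s) ^ (-a) - Real.cosh (k * s) ^ (-(a + 2))) := by
      intro s
      have e : (fun t => u t ^ (p / 2)) = fun t => (p * μ / 2) ^ (p / 2 / (p - 2)) *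
          Real.cosh (k * t) ^ (-(a / 2)) := by
        funext t
        rw [hpow, ha]
        congr 3; ring
      rw [e, ((aux_deriv k (-(a / 2)) s).const_mul _).deriv]
      have e0 : ((p * μ / 2) ^ (p / 2 / (p - 2))) ^ 2 = (p * μ / 2) ^ (p / (p - 2)) := by
        rw [← Real.rpow_two, ← Real.rpow_mul hB.le]; congr 1; ring
      have e1 := aux_pow (k * s) (-(a + 2))
      rw [show -(a + 2) + 2 = -a by ring] at e1
      have e2 : (Real.cosh (k * s) ^ (-(a / 2) - 1)) ^ 2 = Real.cosh (k * s) ^ (-(a + 2)) := by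
        rw [← Real.rpow_two, ← Real.rpow_mul (Real.cosh_pos _).le]; congr 1; ring
      have e3 : (a * k) ^ 2 = p ^ 2 * μ := by
        rw [show a * k = p * Real.sqrt μ by rw [ha, hk]; field_simp, mul_pow, Real.sq_sqrt hμ.le]
      have e4 := Real.sinh_sq (k * s)
      rw [e1, ← e0, ← e3]
      rw [show ∀ A S C : ℝ, (A * (-(a / 2) * k * (S * C))) ^ 2 =
        A ^ 2 * ((a * k) ^ 2 / 4) * (S ^ 2 * C ^ 2) by intros; ring, e2, e4]
      ring
    simp_rw [hd]
    rw [hP, integral_const_mul, integral_sub hI hI2, r1]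
    have e : ∀ J : ℝ, J - 2 * p / (3 * p - 2) * J = (p - 2) / (3 * p - 2) * J := by
      intro J
      have : (p - 2) / (3 * p - 2) = 1 - 2 * p / (3 * p - 2) := by
        rw [eq_sub_iff_add_eq, ← add_div, div_eq_one_iff_eq h3]; ring
      rw [this]; ring
    rw [e]
    field_simp
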